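/- arXiv:1809.09814 — 3 statements merged into one kernel-verified Lean document; each statement's English description precedes it below -/
import Mathlib

section
/- Lemma 5: Suppose x̌ ∈ F is a feasible point of the BMI problem that satisfies the MFCQ condition, and let ε > 0. Then there exists η₀ > 0 such that for all η ≥ η₀ and every optimal solution x* of the penalized problem (P_η), there exists an m×m real symmetric positive semidefinite matrix Λ* such that (x*, Λ*) satisfies the KKT conditions for (P_η) and tr(Λ*)/η ≤ ε. -/
/-!
Comparing an optimal `x*` of the penalized problem with the feasible point `x̌` gives
`‖x* - x̌‖ ≤ ‖c‖ / η` (`IsOptPen.dist_bound`), so for large `η` the point `x*` is close to `x̌` and,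
by continuity, the MFCQ direction `b` of `x̌` satisfies
`p(x*) + ∑ₖ bₖ (Kₖ + δₖ(x*)) ⪯ -(μ/2) I` with `μ > 0` independent of `η`.

Moving from `x*` a short way along a direction `d` with `p(x*) + ∑ₖ dₖ (Kₖ + δₖ(x*)) ≺ 0` stays
feasible, so such `d` cannot be descent directions (`IsOptPen.nonneg_dir`). Since `b` is a Slater
point of this linearised problem, separating convex sets yields a multiplier `Λ*`
(`exists_multiplier`), and complementarity of the traces upgrades to `Λ* p(x*) = 0`
(`mul_eq_zero_of_trace_eq_zero`).

Pairing `Λ*` with the Slater inequality gives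
`(μ/2) tr Λ* ≤ cᵀb + 2 η (x* - x̌)ᵀb ≤ |cᵀb| + ‖c‖² + ‖b‖²`, a bound that does not depend on `η`;
dividing by `η` makes it at most `ε`.
-/

open Matrix

noncomputable section

/-- Euclidean (ℓ₂) norm of a finite real vector. -/
def vecNorm {k : ℕ} (u : Fin k → ℝ) : ℝ := Real.sqrt (∑ i, u i ^ 2)

/-- The matrix pencil `p(x, X) = F₀ + ∑ₖ xₖ Kₖ + ∑ᵢ ∑ⱼ Xᵢⱼ Lᵢⱼ`. -/
def pencil {n m : ℕ} (F0 : Matrix (Fin m) (Fin m) ℝ)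
    (K : Fin n → Matrix (Fin m) (Fin m) ℝ)
    (L : Fin n → Fin n → Matrix (Fin m) (Fin m) ℝ)
    (x : Fin n → ℝ) (X : Matrix (Fin n) (Fin n) ℝ) : Matrix (Fin m) (Fin m) ℝ :=
  F0 + ∑ k, x k • K k + ∑ i, ∑ j, X i j • L i j

/-- Negative semidefinite real matrix. -/
def NegSemidef' {k : ℕ} (A : Matrix (Fin k) (Fin k) ℝ) : Prop := (-A).PosSemidef

/-- Negative definite real matrix. -/
def NegDef' {k : ℕ} (A : Matrix (Fin k) (Fin k) ℝ) : Prop := (-A).PosDef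

/-- The BMI feasible set `F = {x : p(x, xxᵀ) ⪯ 0}`. -/
def feasSet {n m : ℕ} (F0 : Matrix (Fin m) (Fin m) ℝ)
    (K : Fin n → Matrix (Fin m) (Fin m) ℝ)
    (L : Fin n → Fin n → Matrix (Fin m) (Fin m) ℝ) : Set (Fin n → ℝ) :=
  {x | NegSemidef' (pencil F0 K L x (vecMulVec x x))}

/-- Feasibility distance `d_F(x) = inf {‖x − a‖₂ : a ∈ F}`. -/
def distF {n m : ℕ} (F0 : Matrix (Fin m) (Fin m) ℝ)
    (K : Fin n → Matrix (Fin m) (Fin m) ℝ)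
    (L : Fin n → Fin n → Matrix (Fin m) (Fin m) ℝ) (x : Fin n → ℝ) : ℝ :=
  sInf {r | ∃ a ∈ feasSet F0 K L, r = vecNorm (x - a)}

/-- `δₖ(x) = 2 ∑ᵢ xᵢ L_{k i}`. -/
def deltaMat {n m : ℕ} (L : Fin n → Fin n → Matrix (Fin m) (Fin m) ℝ)
    (k : Fin n) (x : Fin n → ℝ) : Matrix (Fin m) (Fin m) ℝ :=
  (2 : ℝ) • ∑ i, x i • L k i

/-- The MFCQ condition at a point `x`. -/
def MFCQ {n m : ℕ} (F0 : Matrix (Fin m) (Fin m) ℝ)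
    (K : Fin n → Matrix (Fin m) (Fin m) ℝ)
    (L : Fin n → Fin n → Matrix (Fin m) (Fin m) ℝ) (x : Fin n → ℝ) : Prop :=
  ∃ b : Fin n → ℝ,
    NegDef' (pencil F0 K L x (vecMulVec x x) + ∑ k, b k • (K k + deltaMat L k x))

/-- Smallest eigenvalue of a symmetric real matrix, via the Rayleigh quotient. -/
def lambdaMin {k : ℕ} (A : Matrix (Fin k) (Fin k) ℝ) : ℝ :=
  sInf {r | ∃ u : Fin k → ℝ, vecNorm u = 1 ∧ r = u ⬝ᵥ (A *ᵥ u)}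

/-- The G-MFCQ function `s(x)`. -/
def sFun {n m : ℕ} (K : Fin n → Matrix (Fin m) (Fin m) ℝ)
    (L : Fin n → Fin n → Matrix (Fin m) (Fin m) ℝ) (x : Fin n → ℝ) : ℝ :=
  sSup {r | ∃ b : Fin n → ℝ, vecNorm b = 1 ∧
    r = lambdaMin (-(∑ k, b k • (K k + deltaMat L k x)))}

/-- Spectral norm of a real matrix. -/
def specNorm {k : ℕ} (A : Matrix (Fin k) (Fin k) ℝ) : ℝ :=
  sSup {r | ∃ v : Fin k → ℝ, vecNorm v = 1 ∧ r = vecNorm (A *ᵥ v)}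

/-- Pencil norm `‖p‖₂`. -/
def pencilNorm {n m : ℕ} (L : Fin n → Fin n → Matrix (Fin m) (Fin m) ℝ) : ℝ :=
  sSup {r | ∃ u : Fin m → ℝ, vecNorm u = 1 ∧
    r = specNorm (Matrix.of fun i j => u ⬝ᵥ (L i j *ᵥ u))}

/-- Cone `C₁`: positive semidefinite matrices. -/
def coneC1 (n : ℕ) : Set (Matrix (Fin n) (Fin n) ℝ) := {H | H.PosSemidef}

/-- Cone `C₂`: symmetric matrices with `Hᵢᵢ ≥ 0` and `Hᵢᵢ Hⱼⱼ ≥ Hᵢⱼ²`. -/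
def coneC2 (n : ℕ) : Set (Matrix (Fin n) (Fin n) ℝ) :=
  {H | H.IsSymm ∧ ∀ i j, 0 ≤ H i i ∧ H i j ^ 2 ≤ H i i * H j j}

/-- Cone `C₃`: symmetric matrices with `Hᵢᵢ ≥ 0` and `Hᵢᵢ + Hⱼⱼ ≥ 2|Hᵢⱼ|`. -/
def coneC3 (n : ℕ) : Set (Matrix (Fin n) (Fin n) ℝ) :=
  {H | H.IsSymm ∧ ∀ i j, 0 ≤ H i i ∧ 2 * |H i j| ≤ H i i + H j j}

/-- Dual cone with respect to the trace inner product. -/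
def dualCone {n : ℕ} (C : Set (Matrix (Fin n) (Fin n) ℝ)) :
    Set (Matrix (Fin n) (Fin n) ℝ) :=
  {Y | Y.IsSymm ∧ ∀ H ∈ C, 0 ≤ (Y * H).trace}

/-- `α(Λ)` : the n×n matrix with entries `⟨Lᵢⱼ, Λ⟩ = tr(Lᵢⱼ Λ)`. -/
def alphaMat {n m : ℕ} (L : Fin n → Fin n → Matrix (Fin m) (Fin m) ℝ)
    (Λ : Matrix (Fin m) (Fin m) ℝ) : Matrix (Fin n) (Fin n) ℝ :=
  Matrix.of fun i j => (L i j * Λ).trace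

/-- Objective of the penalized problem `(P_η)`. -/
def penObj {n : ℕ} (c xc : Fin n → ℝ) (η : ℝ) (x : Fin n → ℝ) : ℝ :=
  c ⬝ᵥ x + η * vecNorm (x - xc) ^ 2

/-- `x` is an optimal solution of the penalized problem `(P_η)`. -/
def IsOptPen {n m : ℕ} (F0 : Matrix (Fin m) (Fin m) ℝ)
    (K : Fin n → Matrix (Fin m) (Fin m) ℝ)
    (L : Fin n → Fin n → Matrix (Fin m) (Fin m) ℝ)
    (c xc : Fin n → ℝ) (η : ℝ) (x : Fin n → ℝ) : Prop :=
  x ∈ feasSet F0 K L ∧ ∀ y ∈ feasSet F0 K L, penObj c xc η x ≤ penObj c xc η y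

/-- Objective of the penalized convex relaxation `(R_{η,C})`. -/
def relObj {n : ℕ} (c xc : Fin n → ℝ) (η : ℝ) (x : Fin n → ℝ)
    (X : Matrix (Fin n) (Fin n) ℝ) : ℝ :=
  c ⬝ᵥ x + η * (X.trace - 2 * (xc ⬝ᵥ x) + xc ⬝ᵥ xc)

/-- Feasibility for the relaxation with cone `C`. -/
def RelFeasible {n m : ℕ} (F0 : Matrix (Fin m) (Fin m) ℝ)
    (K : Fin n → Matrix (Fin m) (Fin m) ℝ)
    (L : Fin n → Fin n → Matrix (Fin m) (Fin m) ℝ)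
    (C : Set (Matrix (Fin n) (Fin n) ℝ))
    (x : Fin n → ℝ) (X : Matrix (Fin n) (Fin n) ℝ) : Prop :=
  X.IsSymm ∧ NegSemidef' (pencil F0 K L x X) ∧ X - vecMulVec x x ∈ C

/-- `(x, X)` is an optimal solution of the penalized convex relaxation `(R_{η,C})`. -/
def IsOptRel {n m : ℕ} (F0 : Matrix (Fin m) (Fin m) ℝ)
    (K : Fin n → Matrix (Fin m) (Fin m) ℝ)
    (L : Fin n → Fin n → Matrix (Fin m) (Fin m) ℝ)
    (c xc : Fin n → ℝ) (η : ℝ) (C : Set (Matrix (Fin n) (Fin n) ℝ))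
    (x : Fin n → ℝ) (X : Matrix (Fin n) (Fin n) ℝ) : Prop :=
  RelFeasible F0 K L C x X ∧
    ∀ y Y, RelFeasible F0 K L C y Y → relObj c xc η x X ≤ relObj c xc η y Y

/-- The KKT conditions for `(P_η)` at `(x, Λ)`. -/
def KKT {n m : ℕ} (F0 : Matrix (Fin m) (Fin m) ℝ)
    (K : Fin n → Matrix (Fin m) (Fin m) ℝ)
    (L : Fin n → Fin n → Matrix (Fin m) (Fin m) ℝ)
    (c xc : Fin n → ℝ) (η : ℝ)
    (x : Fin n → ℝ) (Λ : Matrix (Fin m) (Fin m) ℝ) : Prop :=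
  Λ.IsSymm ∧ Λ.PosSemidef ∧
  c + (2 * η) • (x - xc) + (∑ k, ((K k * Λ).trace) • (Pi.single k 1 : Fin n → ℝ))
      + (2 : ℝ) • (alphaMat L Λ *ᵥ x) = 0 ∧
  Λ * pencil F0 K L x (vecMulVec x x) = 0


/-! ### Coercive matrices -/

/-- `Coercive δ M` says that `uᵀ M u ≥ δ ‖u‖²` for all `u`. No symmetry of `M` is required, so that
the matrices coercive with some `δ > 0` form an open set in the space of all square matrices. -/
def Coercive {m : ℕ} (δ : ℝ) (M : Matrix (Fin m) (Fin m) ℝ) : Prop :=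
  ∀ u : Fin m → ℝ, δ * (u ⬝ᵥ u) ≤ u ⬝ᵥ (M *ᵥ u)

lemma dotProduct_self_nonneg' {k : ℕ} (u : Fin k → ℝ) : 0 ≤ u ⬝ᵥ u :=
  Finset.sum_nonneg fun i _ => mul_self_nonneg (u i)

lemma sq_le_dotProduct_self {k : ℕ} (u : Fin k → ℝ) (i : Fin k) : u i ^ 2 ≤ u ⬝ᵥ u := by
  rw [pow_two]
  exact Finset.single_le_sum (f := fun i => u i * u i) (fun j _ => mul_self_nonneg (u j))
    (Finset.mem_univ i)

lemma Coercive.add {m : ℕ} {δ δ' : ℝ} {M N : Matrix (Fin m) (Fin m) ℝ}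
    (hM : Coercive δ M) (hN : Coercive δ' N) : Coercive (δ + δ') (M + N) := by
  intro u
  have h1 := hM u
  have h2 := hN u
  rw [add_mulVec, dotProduct_add]
  linarith

lemma Coercive.smul {m : ℕ} {δ t : ℝ} {M : Matrix (Fin m) (Fin m) ℝ}
    (hM : Coercive δ M) (ht : 0 ≤ t) : Coercive (t * δ) (t • M) := by
  intro u
  have h1 := mul_le_mul_of_nonneg_left (hM u) ht
  rw [smul_mulVec, dotProduct_smul, smul_eq_mul]
  linarith

lemma Coercive.mono {m : ℕ} {δ δ' : ℝ} {M : Matrix (Fin m) (Fin m) ℝ}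
    (hM : Coercive δ M) (h : δ' ≤ δ) : Coercive δ' M := fun u =>
  (mul_le_mul_of_nonneg_right h (dotProduct_self_nonneg' u)).trans (hM u)

lemma coercive_one {m : ℕ} : Coercive 1 (1 : Matrix (Fin m) (Fin m) ℝ) := by
  intro u; simp

lemma Coercive.of_posSemidef {m : ℕ} {M : Matrix (Fin m) (Fin m) ℝ} (hM : M.PosSemidef) :
    Coercive 0 M := by
  intro u
  simpa using hM.dotProduct_mulVec_nonneg u

/-- Every matrix is coercive with constant minus the sum of the absolute values of its entries. -/
lemma coercive_neg_sum_abs {m : ℕ} (M : Matrix (Fin m) (Fin m) ℝ) :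
    Coercive (-∑ i, ∑ j, |M i j|) M := by
  intro u
  have hl : (-∑ i, ∑ j, |M i j|) * (u ⬝ᵥ u) = ∑ i, ∑ j, -(|M i j| * (u ⬝ᵥ u)) := by
    simp only [neg_mul, Finset.sum_mul, Finset.sum_neg_distrib]
  have hr : u ⬝ᵥ (M *ᵥ u) = ∑ i, ∑ j, u i * (M i j * u j) := by
    simp only [dotProduct, mulVec, Finset.mul_sum]
  rw [hl, hr]
  refine Finset.sum_le_sum fun i _ => Finset.sum_le_sum fun j _ => ?_
  have hi := sq_le_dotProduct_self u i
  have hj := sq_le_dotProduct_self u j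
  have hu : |u i * u j| ≤ u ⬝ᵥ u := by
    rw [abs_le]
    constructor <;> nlinarith [sq_nonneg (u i - u j), sq_nonneg (u i + u j)]
  have h1 : |u i * (M i j * u j)| ≤ |M i j| * (u ⬝ᵥ u) := by
    rw [show u i * (M i j * u j) = M i j * (u i * u j) by ring, abs_mul]
    exact mul_le_mul_of_nonneg_left hu (abs_nonneg _)
  exact (abs_le.1 h1).1

lemma Coercive.eventually {m : ℕ} {δ δ' : ℝ} {M : Matrix (Fin m) (Fin m) ℝ}
    (hM : Coercive δ M) (h : δ' < δ) : ∀ᶠ N in nhds M, Coercive δ' N := by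
  have hc : Continuous fun N : Matrix (Fin m) (Fin m) ℝ => ∑ i, ∑ j, |(N - M) i j| := by
    refine continuous_finsetSum _ fun i _ => continuous_finsetSum _ fun j _ => ?_
    exact ((continuous_id.sub continuous_const).matrix_elem i j).abs
  have h0 := hc.tendsto M
  simp only [sub_self, Matrix.zero_apply, abs_zero, Finset.sum_const_zero] at h0
  filter_upwards [h0.eventually (gt_mem_nhds (sub_pos.2 h))] with N hN
  have := (hM.add (coercive_neg_sum_abs (N - M))).mono (δ' := δ') (by linarith)
  simpa using this

/-- A positive definite matrix is coercive, by compactness of the unit sphere. -/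
lemma exists_coercive_of_posDef {m : ℕ} {M : Matrix (Fin m) (Fin m) ℝ} (hM : M.PosDef) :
    ∃ δ > 0, Coercive δ M := by
  have hcu : Continuous fun u : Fin m → ℝ => u ⬝ᵥ u := by fun_prop
  have hcM : Continuous fun u : Fin m → ℝ => u ⬝ᵥ (M *ᵥ u) := by fun_prop
  have hK : IsCompact {u : Fin m → ℝ | u ⬝ᵥ u = 1} := by
    refine Metric.isCompact_of_isClosed_isBounded (isClosed_eq hcu continuous_const) ?_
    refine (Metric.isBounded_closedBall (x := (0 : Fin m → ℝ)) (r := 1)).subset fun u hu => ?_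
    rw [mem_closedBall_zero_iff, pi_norm_le_iff_of_nonneg zero_le_one]
    intro i
    rw [Real.norm_eq_abs, ← sq_le_one_iff_abs_le_one]
    exact (sq_le_dotProduct_self u i).trans (le_of_eq hu)
  have key : ∃ δ > 0, ∀ u : Fin m → ℝ, u ⬝ᵥ u = 1 → δ ≤ u ⬝ᵥ (M *ᵥ u) := by
    rcases Set.eq_empty_or_nonempty {u : Fin m → ℝ | u ⬝ᵥ u = 1} with he | hne
    · refine ⟨1, one_pos, fun u hu => ?_⟩
      have : u ∈ {u : Fin m → ℝ | u ⬝ᵥ u = 1} := hu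
      simp [he] at this
    · obtain ⟨v, hv, hmin⟩ := hK.exists_isMinOn hne hcM.continuousOn
      refine ⟨v ⬝ᵥ (M *ᵥ v), ?_, fun u hu => hmin hu⟩
      have hv0 : v ≠ 0 := by
        rintro rfl
        simp at hv
      simpa using hM.dotProduct_mulVec_pos hv0
  obtain ⟨δ, hδ, h⟩ := key
  refine ⟨δ, hδ, fun u => ?_⟩
  rcases (dotProduct_self_nonneg' u).eq_or_lt with h0 | hpos
  · have : u = 0 := dotProduct_self_eq_zero.1 h0.symm
    simp [this]
  · have hs : 0 < Real.sqrt (u ⬝ᵥ u) := Real.sqrt_pos.2 hpos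
    have hss := Real.mul_self_sqrt hpos.le
    set s := Real.sqrt (u ⬝ᵥ u)
    have h1 := h (s⁻¹ • u) (by
      simp only [smul_dotProduct, dotProduct_smul, smul_eq_mul]
      rw [← hss]; field_simp)
    simp only [mulVec_smul, smul_dotProduct, dotProduct_smul, smul_eq_mul] at h1
    rw [← hss]
    have h2 := mul_le_mul_of_nonneg_right h1 (mul_self_nonneg s)
    refine h2.trans (le_of_eq ?_)
    field_simp

/-! ### Complementary slackness -/

/-- Complementary slackness: if `Λ ⪰ 0`, `N ⪰ 0` and `tr (N Λ) = 0` then `Λ N = 0`. Writing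
`Λ = Bᵀ B` and `N = Cᵀ C`, the trace is the squared Frobenius norm of `B Cᵀ`. -/
lemma mul_eq_zero_of_trace_eq_zero {m : ℕ} {Λ N : Matrix (Fin m) (Fin m) ℝ}
    (hΛ : Λ.PosSemidef) (hN : N.PosSemidef) (h : (N * Λ).trace = 0) : Λ * N = 0 := by
  open scoped MatrixOrder in
  obtain ⟨B, rfl⟩ := CStarAlgebra.nonneg_iff_eq_star_mul_self.mp hΛ.nonneg
  open scoped MatrixOrder in
  obtain ⟨C, rfl⟩ := CStarAlgebra.nonneg_iff_eq_star_mul_self.mp hN.nonneg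
  simp only [star_eq_conjTranspose] at *
  have h1 : ((B * Cᴴ)ᴴ * (B * Cᴴ)).trace = 0 := by
    rw [← h, conjTranspose_mul, conjTranspose_conjTranspose, Matrix.mul_assoc,
      trace_mul_comm C, trace_mul_comm (Cᴴ * C)]
    simp only [Matrix.mul_assoc]
  rw [trace_conjTranspose_mul_self_eq_zero_iff] at h1
  calc Bᴴ * B * (Cᴴ * C) = Bᴴ * (B * Cᴴ) * C := by simp only [Matrix.mul_assoc]
    _ = 0 := by rw [h1, Matrix.mul_zero, Matrix.zero_mul]

/-! ### Multipliers by separation -/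

lemma nonneg_of_forall_add_mul_nonneg {a b : ℝ} (h : ∀ t : ℝ, 0 ≤ t → 0 ≤ a + t * b) : 0 ≤ b := by
  by_contra hb
  push Not at hb
  have h1 := h ((|a| + 1) / (-b)) (by have := neg_pos.2 hb; positivity)
  rw [show (|a| + 1) / (-b) * b = -(|a| + 1) by
    rw [div_neg, neg_mul, div_mul_cancel₀ _ hb.ne]] at h1
  linarith [le_abs_self a]

lemma nonneg_of_forall_pos_add_mul {a b : ℝ} (h : ∀ t : ℝ, 0 < t → 0 < a + t * b) : 0 ≤ a := by
  by_contra ha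
  push Not at ha
  have hb : 0 < |b| + 1 := by positivity
  have h1 := h (-a / (|b| + 1)) (div_pos (neg_pos.2 ha) hb)
  have h2 : -a / (|b| + 1) * b ≤ -a := by
    rw [div_mul_eq_mul_div, div_le_iff₀ hb]
    nlinarith [le_abs_self b]
  linarith

/-- The symmetric matrix representing, on symmetric matrices, the linear functional `ℓ` through
the trace pairing. -/
def symRep {m : ℕ} (ℓ : Matrix (Fin m) (Fin m) ℝ →ₗ[ℝ] ℝ) : Matrix (Fin m) (Fin m) ℝ :=
  Matrix.of fun i j => (ℓ (single i j 1) + ℓ (single j i 1)) / 2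

lemma symRep_isSymm {m : ℕ} (ℓ : Matrix (Fin m) (Fin m) ℝ →ₗ[ℝ] ℝ) : (symRep ℓ).IsSymm := by
  ext i j
  simp [symRep, add_comm]

lemma trace_mul_symRep {m : ℕ} (ℓ : Matrix (Fin m) (Fin m) ℝ →ₗ[ℝ] ℝ)
    {M : Matrix (Fin m) (Fin m) ℝ} (hM : M.IsSymm) : (M * symRep ℓ).trace = ℓ M := by
  have h1 : ℓ M = ∑ i, ∑ j, M i j * ℓ (single i j 1) := by
    conv_lhs => rw [matrix_eq_sum_single M]
    simp only [map_sum]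
    refine Finset.sum_congr rfl fun i _ => Finset.sum_congr rfl fun j _ => ?_
    rw [← smul_eq_mul, ← map_smul, smul_single, smul_eq_mul, mul_one]
  have h2 : ℓ M = ∑ i, ∑ j, M i j * ℓ (single j i 1) := by
    rw [h1, Finset.sum_comm]
    refine Finset.sum_congr rfl fun i _ => Finset.sum_congr rfl fun j _ => ?_
    rw [hM.apply]
  have h3 : (M * symRep ℓ).trace
      = ((∑ i, ∑ j, M i j * ℓ (single i j 1)) + ∑ i, ∑ j, M i j * ℓ (single j i 1)) / 2 := by
    rw [← Finset.sum_add_distrib, Finset.sum_div]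
    refine Finset.sum_congr rfl fun i _ => ?_
    rw [← Finset.sum_add_distrib, Finset.sum_div]
    simp only [diag_apply, mul_apply, symRep, of_apply]
    refine Finset.sum_congr rfl fun j _ => ?_
    ring
  rw [h3, ← h1, ← h2]; ring

/-- Lagrange multipliers for a linear semidefinite problem under a Slater condition. If no
direction `d` with `P + D d ≺ 0` decreases the linear objective `g`, and some direction satisfies
`P + D b ≺ 0`, then there is a multiplier `Λ ⪰ 0`. It comes from separating the origin from the
open convex set of `(s, M)` for which some `d` has `g d < s` and `M ≻ P + D d`. -/
lemma exists_multiplier {n m : ℕ} (P : Matrix (Fin m) (Fin m) ℝ) (hP : P.IsSymm)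
    (hPneg : Coercive 0 (-P))
    (D : (Fin n → ℝ) →ₗ[ℝ] Matrix (Fin m) (Fin m) ℝ) (hD : ∀ d, (D d).IsSymm)
    (g : (Fin n → ℝ) →ₗ[ℝ] ℝ)
    (hopt : ∀ d, ∀ δ > 0, Coercive δ (-(P + D d)) → 0 ≤ g d)
    (b : Fin n → ℝ) (μ : ℝ) (hμ : 0 < μ) (hb : Coercive μ (-(P + D b))) :
    ∃ Λ : Matrix (Fin m) (Fin m) ℝ, Λ.IsSymm ∧ Λ.PosSemidef ∧
      (∀ N : Matrix (Fin m) (Fin m) ℝ, N.IsSymm → Coercive 0 N → 0 ≤ (N * Λ).trace) ∧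
      (∀ d, g d + (D d * Λ).trace = 0) ∧ (P * Λ).trace = 0 := by
  set S : Set (ℝ × Matrix (Fin m) (Fin m) ℝ) :=
    {q | ∃ d, g d < q.1 ∧ ∃ δ > 0, Coercive δ (q.2 - (P + D d))} with hS
  have hconv : Convex ℝ S := by
    rintro ⟨s, M⟩ ⟨d, hd, δ, hδ, hc⟩ ⟨s', M'⟩ ⟨d', hd', δ', hδ', hc'⟩ a a' ha ha' haa
    refine ⟨a • d + a' • d', ?_, a * δ + a' * δ', ?_, ?_⟩
    · simp only [map_add, map_smul, smul_eq_mul, Prod.smul_mk, Prod.mk_add_mk] at *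
      rcases ha.eq_or_lt with h0 | h0
      · have : a' = 1 := by linarith
        subst h0 this; linarith
      · nlinarith
    · rcases ha.eq_or_lt with h0 | h0
      · have : a' = 1 := by linarith
        subst h0 this; linarith
      · nlinarith
    · convert (hc.smul ha).add (hc'.smul ha') using 1
      have hPP : P = a • P + a' • P := by rw [← add_smul, haa, one_smul]
      simp only [map_add, map_smul, Prod.smul_mk, Prod.mk_add_mk]
      nth_rewrite 1 [hPP]
      simp only [smul_sub, smul_add]
      abel
  have hopen : IsOpen S := by
    rw [isOpen_iff_mem_nhds]
    rintro ⟨s, M⟩ ⟨d, hd, δ, hδ, hc⟩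
    have h1 : ∀ᶠ q : ℝ × Matrix (Fin m) (Fin m) ℝ in nhds (s, M), g d < q.1 :=
      continuous_fst.continuousAt.eventually (lt_mem_nhds hd)
    have hcont : Continuous fun q : ℝ × Matrix (Fin m) (Fin m) ℝ => q.2 - (P + D d) := by fun_prop
    have h2 : ∀ᶠ q : ℝ × Matrix (Fin m) (Fin m) ℝ in nhds (s, M),
        Coercive (δ / 2) (q.2 - (P + D d)) :=
      hcont.continuousAt.eventually (hc.eventually (half_lt_self hδ))
    filter_upwards [h1, h2] with q hq1 hq2
    exact ⟨d, hq1, δ / 2, half_pos hδ, hq2⟩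
  have h0 : (0 : ℝ × Matrix (Fin m) (Fin m) ℝ) ∉ S := by
    rintro ⟨d, hd, δ, hδ, hc⟩
    have := hopt d δ hδ (by simpa using hc)
    exact absurd hd (not_lt.2 this)
  obtain ⟨f, hf⟩ := geometric_hahn_banach_open_point hconv hopen h0
  rw [map_zero] at hf
  -- The functional `-f` splits as `(s, M) ↦ lam * s + ℓ M`.
  set lam : ℝ := -f (1, 0) with hlam
  let ℓ : Matrix (Fin m) (Fin m) ℝ →ₗ[ℝ] ℝ :=
    -(f.toLinearMap ∘ₗ LinearMap.inr ℝ ℝ (Matrix (Fin m) (Fin m) ℝ))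
  have hsplit : ∀ s M, -f (s, M) = s * lam + ℓ M := by
    intro s M
    have : ((s, M) : ℝ × Matrix (Fin m) (Fin m) ℝ) = s • (1, 0) + (0, M) := by simp
    rw [this, map_add, map_smul]
    simp [ℓ, hlam]
    ring
  have hpos : ∀ s M, (s, M) ∈ S → 0 < s * lam + ℓ M := by
    intro s M h
    rw [← hsplit]
    linarith [hf _ h]
  have hclos : ∀ d s N, g d ≤ s → Coercive 0 N → 0 ≤ s * lam + ℓ (P + D d + N) := by
    intro d s N hs hN
    refine nonneg_of_forall_pos_add_mul (b := lam + ℓ 1) fun t ht => ?_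
    have := hpos (s + t) (P + D d + N + t • 1) ⟨d, by simp; linarith, t, ht, by
      have := hN.add ((coercive_one (m := m)).smul ht.le)
      simp only [zero_add, mul_one] at this
      convert this using 1
      simp only
      abel⟩
    rw [map_add, map_smul, smul_eq_mul] at this
    linarith
  have hlam0 : 0 ≤ lam := by
    refine nonneg_of_forall_add_mul_nonneg (a := ℓ P) fun t ht => ?_
    have := hclos 0 t 0 (by simpa using ht) (by intro u; simp)
    simp only [map_zero, add_zero] at this
    linarith
  have hlampos : 0 < lam := by
    refine hlam0.lt_of_ne fun h => ?_
    have := hpos (g b + 1) 0 ⟨b, by simp, μ, hμ, by simpa using hb⟩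
    rw [← h] at this
    simp at this
  have hℓ : ∀ N, Coercive 0 N → 0 ≤ ℓ N := by
    intro N hN
    refine nonneg_of_forall_add_mul_nonneg (a := ℓ P) fun t ht => ?_
    have := hclos 0 0 (t • N) (by simp) (by simpa using hN.smul ht)
    simpa using this
  have hstat0 : ∀ d, 0 ≤ lam * g d + ℓ (D d) := by
    intro d
    refine nonneg_of_forall_add_mul_nonneg (a := ℓ P) fun t ht => ?_
    have := hclos (t • d) (g (t • d)) 0 le_rfl (by intro u; simp)
    simp only [map_smul, add_zero, map_add, smul_eq_mul] at this
    linarith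
  have hstat : ∀ d, lam * g d + ℓ (D d) = 0 := by
    intro d
    have h1 := hstat0 d
    have h2 := hstat0 (-d)
    simp only [map_neg] at h2
    linarith
  have hℓP : ℓ P = 0 := by
    have h1 := hclos 0 0 0 (by simp) (by intro u; simp)
    simp only [map_zero, add_zero, zero_mul, zero_add] at h1
    have h2 := hℓ _ hPneg
    rw [map_neg] at h2
    linarith
  have htr : ∀ N : Matrix (Fin m) (Fin m) ℝ, N.IsSymm →
      (N * symRep (lam⁻¹ • ℓ)).trace = lam⁻¹ * ℓ N := by
    intro N hN
    rw [trace_mul_symRep _ hN]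
    simp
  refine ⟨symRep (lam⁻¹ • ℓ), symRep_isSymm _, ?_, ?_, ?_, ?_⟩
  · refine .of_dotProduct_mulVec_nonneg (by simpa using symRep_isSymm (lam⁻¹ • ℓ)) fun u => ?_
    have h1 : star u ⬝ᵥ (symRep (lam⁻¹ • ℓ) *ᵥ u)
        = (vecMulVec u u * symRep (lam⁻¹ • ℓ)).trace := by
      rw [trace_mul_comm, mul_vecMulVec, trace_vecMulVec, dotProduct_comm, star_trivial]
    rw [h1, htr _ (by ext i j; simp [vecMulVec_apply, mul_comm])]
    refine mul_nonneg (inv_nonneg.2 hlam0) (hℓ _ fun v => ?_)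
    rw [vecMulVec_mulVec]
    simp only [zero_mul, op_smul_eq_smul, dotProduct_smul, smul_eq_mul]
    rw [dotProduct_comm v u]
    exact mul_self_nonneg _
  · intro N hN hc
    rw [htr _ hN]
    exact mul_nonneg (inv_nonneg.2 hlam0) (hℓ _ hc)
  · intro d
    rw [htr _ (hD d)]
    have := hstat d
    field_simp
    linarith
  · rw [htr _ hP, hℓP, mul_zero]

/-! ### The pencil along lines and the penalized problem -/

section Penalized

variable {n m : ℕ}

/-- The derivative of `x ↦ p(x, x xᵀ)` at `x`, that is `d ↦ ∑ₖ dₖ (Kₖ + δₖ(x))`. -/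
def pencilDeriv (K : Fin n → Matrix (Fin m) (Fin m) ℝ)
    (L : Fin n → Fin n → Matrix (Fin m) (Fin m) ℝ) (x : Fin n → ℝ) :
    (Fin n → ℝ) →ₗ[ℝ] Matrix (Fin m) (Fin m) ℝ :=
  ∑ k, (LinearMap.proj k).smulRight (K k + deltaMat L k x)

lemma pencilDeriv_apply (K : Fin n → Matrix (Fin m) (Fin m) ℝ)
    (L : Fin n → Fin n → Matrix (Fin m) (Fin m) ℝ) (x d : Fin n → ℝ) :
    pencilDeriv K L x d = ∑ k, d k • (K k + deltaMat L k x) := by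
  simp [pencilDeriv]

lemma isSymm_sum' {ι : Type*} (s : Finset ι) (A : ι → Matrix (Fin m) (Fin m) ℝ)
    (h : ∀ i, (A i).IsSymm) : (∑ i ∈ s, A i).IsSymm := by
  rw [IsSymm, transpose_sum]
  exact Finset.sum_congr rfl fun i _ => h i

lemma pencilDeriv_isSymm {K : Fin n → Matrix (Fin m) (Fin m) ℝ}
    {L : Fin n → Fin n → Matrix (Fin m) (Fin m) ℝ} (hK : ∀ k, (K k).IsSymm)
    (hL : ∀ i j, (L i j).IsSymm) (x d : Fin n → ℝ) : (pencilDeriv K L x d).IsSymm := by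
  rw [pencilDeriv_apply]
  refine isSymm_sum' _ _ fun k => ((hK k).add ?_).smul _
  exact (isSymm_sum' _ _ fun i => (hL k i).smul _).smul _

lemma pencil_isSymm {F0 : Matrix (Fin m) (Fin m) ℝ} {K : Fin n → Matrix (Fin m) (Fin m) ℝ}
    {L : Fin n → Fin n → Matrix (Fin m) (Fin m) ℝ} (hF0 : F0.IsSymm) (hK : ∀ k, (K k).IsSymm)
    (hL : ∀ i j, (L i j).IsSymm) (x : Fin n → ℝ) (X : Matrix (Fin n) (Fin n) ℝ) :
    (pencil F0 K L x X).IsSymm :=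
  (hF0.add (isSymm_sum' _ _ fun k => (hK k).smul _)).add
    (isSymm_sum' _ _ fun i => isSymm_sum' _ _ fun j => (hL i j).smul _)

/-- Exact second order expansion of the pencil along a line. -/
lemma pencil_line (F0 : Matrix (Fin m) (Fin m) ℝ) (K : Fin n → Matrix (Fin m) (Fin m) ℝ)
    (L : Fin n → Fin n → Matrix (Fin m) (Fin m) ℝ) (hLsy : ∀ i j, L i j = L j i)
    (x d : Fin n → ℝ) (t : ℝ) :
    pencil F0 K L (x + t • d) (vecMulVec (x + t • d) (x + t • d))
      = pencil F0 K L x (vecMulVec x x) + t • pencilDeriv K L x d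
        + t ^ 2 • ∑ i, ∑ j, (d i * d j) • L i j := by
  have hsw : ∑ i, ∑ j, (x i * d j) • L i j = ∑ i, ∑ j, (d i * x j) • L i j := by
    rw [Finset.sum_comm]
    refine Finset.sum_congr rfl fun i _ => Finset.sum_congr rfl fun j _ => ?_
    rw [hLsy j i, mul_comm]
  have hquad : ∑ i, ∑ j, (vecMulVec (x + t • d) (x + t • d)) i j • L i j
      = ∑ i, ∑ j, (x i * x j) • L i j + t • ∑ i, ∑ j, (x i * d j) • L i j
        + t • ∑ i, ∑ j, (d i * x j) • L i j + t ^ 2 • ∑ i, ∑ j, (d i * d j) • L i j := by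
    simp only [Finset.smul_sum, ← Finset.sum_add_distrib, smul_smul, ← add_smul]
    refine Finset.sum_congr rfl fun i _ => Finset.sum_congr rfl fun j _ => ?_
    congr 1
    simp only [vecMulVec_apply, Pi.add_apply, Pi.smul_apply, smul_eq_mul]
    ring
  have hlin : ∑ k, (x + t • d) k • K k = ∑ k, x k • K k + t • ∑ k, d k • K k := by
    simp [add_smul, Finset.sum_add_distrib, Finset.smul_sum, smul_smul]
  have hder : pencilDeriv K L x d
      = ∑ k, d k • K k + (2 : ℝ) • ∑ i, ∑ j, (d i * x j) • L i j := by
    rw [pencilDeriv_apply]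
    simp only [deltaMat, smul_add, Finset.sum_add_distrib, Finset.smul_sum, smul_smul]
    congr 1
    refine Finset.sum_congr rfl fun i _ => Finset.sum_congr rfl fun j _ => ?_
    congr 1
    ring
  simp only [pencil]
  rw [hquad, hlin, hder, hsw]
  simp only [vecMulVec_apply]
  module

lemma vecNorm_sq (u : Fin n → ℝ) : vecNorm u ^ 2 = u ⬝ᵥ u := by
  rw [vecNorm, Real.sq_sqrt (Finset.sum_nonneg fun i _ => sq_nonneg _)]
  simp [dotProduct, pow_two]

/-- First order optimality: at an optimal solution no direction along which the linearised
constraint becomes strictly feasible decreases the objective to first order. -/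
lemma IsOptPen.nonneg_dir {F0 : Matrix (Fin m) (Fin m) ℝ} {K : Fin n → Matrix (Fin m) (Fin m) ℝ}
    {L : Fin n → Fin n → Matrix (Fin m) (Fin m) ℝ} (hF0 : F0.IsSymm) (hK : ∀ k, (K k).IsSymm)
    (hL : ∀ i j, (L i j).IsSymm) (hLsy : ∀ i j, L i j = L j i)
    {c xc : Fin n → ℝ} {η : ℝ} {x : Fin n → ℝ} (hx : IsOptPen F0 K L c xc η x)
    (d : Fin n → ℝ) (δ : ℝ) (hδ : 0 < δ)
    (hd : Coercive δ (-(pencil F0 K L x (vecMulVec x x) + pencilDeriv K L x d))) :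
    0 ≤ (c + (2 * η) • (x - xc)) ⬝ᵥ d := by
  obtain ⟨hfeas, hmin⟩ := hx
  have hPneg : Coercive 0 (-pencil F0 K L x (vecMulVec x x)) := .of_posSemidef hfeas
  set Q : Matrix (Fin m) (Fin m) ℝ := ∑ i, ∑ j, (d i * d j) • L i j
  set C : ℝ := ∑ i, ∑ j, |(-Q) i j| with hC
  have hC0 : 0 ≤ C := Finset.sum_nonneg fun i _ => Finset.sum_nonneg fun j _ => abs_nonneg _
  have hQ : Coercive (-C) (-Q) := coercive_neg_sum_abs (-Q)
  -- For small `t > 0` the point `x + t d` is feasible, since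
  -- `p(x + t d) = (1 - t) p(x) + t (p(x) + D d) + t² Q`.
  have hstep : ∀ t : ℝ, 0 < t → t ≤ 1 → t * C ≤ δ → x + t • d ∈ feasSet F0 K L := by
    intro t ht ht1 htC
    refine PosSemidef.of_dotProduct_mulVec_nonneg ?_ fun u => ?_
    · have := (pencil_isSymm hF0 hK hL (x + t • d) (vecMulVec (x + t • d) (x + t • d))).neg
      simpa using this
    · have h := (((hPneg.smul (sub_nonneg.2 ht1)).add (hd.smul ht.le)).add
        (hQ.smul (sq_nonneg t))).mono (δ' := 0) (by nlinarith)
      have h' := h u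
      rw [zero_mul] at h'
      rw [star_trivial, pencil_line F0 K L hLsy]
      refine h'.trans_eq (congrArg (fun M => u ⬝ᵥ (M *ᵥ u)) ?_)
      module
  set t₀ : ℝ := min 1 (δ / (C + 1)) with ht₀
  have ht₀pos : 0 < t₀ := lt_min one_pos (by positivity)
  have hobj : ∀ t : ℝ, 0 < t → t ≤ t₀ →
      0 ≤ (c + (2 * η) • (x - xc)) ⬝ᵥ d + t * (η * (d ⬝ᵥ d)) := by
    intro t ht htt
    have h1 : t ≤ 1 := htt.trans (min_le_left _ _)
    have h2 : t * (C + 1) ≤ δ := by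
      rw [← le_div_iff₀ (by positivity)]
      exact htt.trans (min_le_right _ _)
    have h3 := hmin _ (hstep t ht h1 (by nlinarith))
    simp only [penObj, vecNorm_sq] at h3
    rw [show x + t • d - xc = (x - xc) + t • d by abel] at h3
    simp only [dotProduct_add, add_dotProduct, smul_dotProduct, dotProduct_smul, smul_eq_mul] at h3 ⊢
    rw [dotProduct_comm d (x - xc)] at h3
    have h4 : 0 ≤ t * (c ⬝ᵥ d + 2 * η * ((x - xc) ⬝ᵥ d) + t * (η * (d ⬝ᵥ d))) := by linarith
    exact nonneg_of_mul_nonneg_right h4 ht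
  by_contra hneg
  push Not at hneg
  have hlim : Filter.Tendsto
      (fun t : ℝ => (c + (2 * η) • (x - xc)) ⬝ᵥ d + t * (η * (d ⬝ᵥ d)))
      (nhdsWithin 0 (Set.Ioi 0)) (nhds ((c + (2 * η) • (x - xc)) ⬝ᵥ d)) := by
    have hc : Continuous fun t : ℝ => (c + (2 * η) • (x - xc)) ⬝ᵥ d + t * (η * (d ⬝ᵥ d)) := by
      fun_prop
    have := (hc.tendsto 0).mono_left (nhdsWithin_le_nhds (s := Set.Ioi 0))
    simpa using this
  refine absurd (ge_of_tendsto hlim ?_) (not_le.2 hneg)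
  filter_upwards [Ioc_mem_nhdsGT ht₀pos] with t ht
  exact hobj t ht.1 ht.2

/-- Optimal solutions of the penalized problem lie within distance `‖c‖ / η` of the centre. -/
lemma IsOptPen.dist_bound {F0 : Matrix (Fin m) (Fin m) ℝ} {K : Fin n → Matrix (Fin m) (Fin m) ℝ}
    {L : Fin n → Fin n → Matrix (Fin m) (Fin m) ℝ} {c xc : Fin n → ℝ} {η : ℝ} (hη : 0 < η)
    {x : Fin n → ℝ} (hx : IsOptPen F0 K L c xc η x) (hxc : xc ∈ feasSet F0 K L) :
    η ^ 2 * ((x - xc) ⬝ᵥ (x - xc)) ≤ c ⬝ᵥ c := by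
  have h := hx.2 xc hxc
  simp only [penObj, vecNorm_sq, sub_self, dotProduct_zero, mul_zero, add_zero] at h
  have hx' : c ⬝ᵥ x = c ⬝ᵥ (x - xc) + c ⬝ᵥ xc := by rw [dotProduct_sub]; ring
  set v := x - xc
  -- Expanding `‖c + η v‖² ≥ 0` against `η ‖v‖² ≤ -cᵀv`.
  have h1 := dotProduct_self_nonneg' (c + η • v)
  simp only [dotProduct_add, add_dotProduct, smul_dotProduct, dotProduct_smul, smul_eq_mul] at h1
  rw [dotProduct_comm v c] at h1
  nlinarith

end Penalized

theorem bmi_lemma_five {n m : ℕ} (hn : 0 < n) (hm : 0 < m)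
    (F0 : Matrix (Fin m) (Fin m) ℝ)
    (K : Fin n → Matrix (Fin m) (Fin m) ℝ)
    (L : Fin n → Fin n → Matrix (Fin m) (Fin m) ℝ)
    (hF0 : F0.IsSymm) (hK : ∀ k, (K k).IsSymm)
    (hL : ∀ i j, (L i j).IsSymm) (hLsy : ∀ i j, L i j = L j i)
    (c xc : Fin n → ℝ)
    (hfeas : xc ∈ feasSet F0 K L)
    (hmfcq : MFCQ F0 K L xc)
    (ε : ℝ) (hε : 0 < ε) :
    ∃ η₀ > (0 : ℝ), ∀ η ≥ η₀,
      ∀ xs : Fin n → ℝ, IsOptPen F0 K L c xc η xs →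
        ∃ Λ : Matrix (Fin m) (Fin m) ℝ,
          KKT F0 K L c xc η xs Λ ∧ Λ.trace / η ≤ ε := by
  obtain ⟨b, hb⟩ := hmfcq
  obtain ⟨μ, hμ, hbμ⟩ := exists_coercive_of_posDef hb
  -- Strict feasibility of the linearised constraint along `b` persists near `xc`.
  have hcont : Continuous fun x : Fin n → ℝ =>
      -(pencil F0 K L x (vecMulVec x x) + ∑ k, b k • (K k + deltaMat L k x)) := by
    simp only [pencil, deltaMat, vecMulVec_apply]
    fun_prop
  have hev : ∀ᶠ x in nhds xc, Coercive (μ / 2)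
      (-(pencil F0 K L x (vecMulVec x x) + ∑ k, b k • (K k + deltaMat L k x))) :=
    hcont.continuousAt.eventually (hbμ.eventually (half_lt_self hμ))
  obtain ⟨r, hr, hball⟩ := Metric.eventually_nhds_iff.1 hev
  set R : ℝ := |c ⬝ᵥ b| + c ⬝ᵥ c + b ⬝ᵥ b with hR
  have hcc := dotProduct_self_nonneg' c
  have hbb := dotProduct_self_nonneg' b
  have hR0 : 0 ≤ R := by positivity
  refine ⟨1 + c ⬝ᵥ c / r ^ 2 + R / (μ / 2 * ε), by positivity, fun η hη xs hxs => ?_⟩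
  have hq1 : 0 ≤ c ⬝ᵥ c / r ^ 2 := by positivity
  have hq2 : 0 ≤ R / (μ / 2 * ε) := by positivity
  have hη1 : 1 ≤ η := by linarith
  have hηpos : 0 < η := by linarith
  have hdist := hxs.dist_bound hηpos hfeas
  have hnear : dist xs xc < r := by
    rw [dist_pi_lt_iff hr]
    intro i
    rw [Real.dist_eq]
    refine abs_lt_of_sq_lt_sq ?_ hr.le
    have h1 : (xs i - xc i) ^ 2 ≤ (xs - xc) ⬝ᵥ (xs - xc) := sq_le_dotProduct_self (xs - xc) i
    have h2 : c ⬝ᵥ c < η * r ^ 2 := by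
      rw [← div_lt_iff₀ (by positivity)]
      linarith
    have h3 : η * r ^ 2 ≤ η ^ 2 * r ^ 2 :=
      mul_le_mul_of_nonneg_right (by nlinarith) (sq_nonneg r)
    have h4 : η ^ 2 * (xs i - xc i) ^ 2 < η ^ 2 * r ^ 2 := by
      have := mul_le_mul_of_nonneg_left h1 (sq_nonneg η)
      linarith
    exact lt_of_mul_lt_mul_left h4 (sq_nonneg η)
  have hslater := hball hnear
  rw [← pencilDeriv_apply] at hslater
  set P := pencil F0 K L xs (vecMulVec xs xs) with hP
  have hPs : P.IsSymm := pencil_isSymm hF0 hK hL _ _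
  have hPneg : (-P).PosSemidef := hxs.1
  have hDs := pencilDeriv_isSymm hK hL xs
  obtain ⟨Λ, hΛs, hΛ, hdual, hstat, hPΛ⟩ := exists_multiplier P hPs (.of_posSemidef hPneg)
    (pencilDeriv K L xs) hDs (dotProductBilin ℝ ℝ (c + (2 * η) • (xs - xc)))
    (fun d δ hδ hd => hxs.nonneg_dir hF0 hK hL hLsy d δ hδ hd) b (μ / 2) (half_pos hμ) hslater
  simp only [dotProductBilin_apply_apply] at hstat
  refine ⟨Λ, ⟨hΛs, hΛ, ?_, ?_⟩, ?_⟩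
  · ext k
    have h1 := hstat (Pi.single k 1)
    have h2 : pencilDeriv K L xs (Pi.single k 1) = K k + deltaMat L k xs := by
      rw [pencilDeriv_apply, Finset.sum_eq_single k]
      · simp
      · intro j _ hj; simp [hj]
      · simp
    rw [h2, dotProduct_single_one, Matrix.add_mul, trace_add] at h1
    have h3 : (deltaMat L k xs * Λ).trace = 2 * (alphaMat L Λ *ᵥ xs) k := by
      simp only [deltaMat, alphaMat, mulVec, dotProduct, of_apply, Matrix.smul_mul, trace_smul,
        Finset.sum_mul, trace_sum, smul_eq_mul]
      congr 1
      exact Finset.sum_congr rfl fun i _ => mul_comm _ _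
    have h4 : (∑ k, ((K k * Λ).trace) • (Pi.single k 1 : Fin n → ℝ)) k = (K k * Λ).trace := by
      simp [Finset.sum_apply, Pi.single_apply]
    simp only [Pi.add_apply, Pi.smul_apply, Pi.zero_apply, smul_eq_mul] at h1 ⊢
    rw [h4]
    linarith
  · have := mul_eq_zero_of_trace_eq_zero hΛ hPneg (by simp [hPΛ])
    simpa using this
  -- Testing `-(P + D b) - (μ / 2) I ⪰ 0` against `Λ` bounds `(μ / 2) tr Λ` by the gradient
  -- along `b`, which stays bounded in `η`.
  · have hshift : Coercive 0 (-(P + pencilDeriv K L xs b) + (-(μ / 2)) • 1) := by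
      intro u
      have := hslater u
      simp only [add_mulVec, smul_mulVec, one_mulVec, dotProduct_add, dotProduct_smul,
        smul_eq_mul, neg_mulVec, dotProduct_neg] at this ⊢
      linarith
    have h1 := hdual _ ((hPs.add (hDs b)).neg.add ((isSymm_one).smul _)) hshift
    simp only [Matrix.add_mul, Matrix.neg_mul, Matrix.smul_mul, Matrix.one_mul, trace_add,
      trace_neg, trace_smul, smul_eq_mul, hPΛ] at h1
    have h2 := hstat b
    simp only [add_dotProduct, smul_dotProduct, smul_eq_mul] at h2
    have h3 : 2 * η * ((xs - xc) ⬝ᵥ b) ≤ c ⬝ᵥ c + b ⬝ᵥ b := by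
      have h := dotProduct_self_nonneg' (b - η • (xs - xc))
      simp only [dotProduct_sub, sub_dotProduct, smul_dotProduct, dotProduct_smul,
        smul_eq_mul] at h hdist ⊢
      simp only [dotProduct_comm b] at h ⊢
      nlinarith
    have h4 : μ / 2 * Λ.trace ≤ R := by
      have := le_abs_self (c ⬝ᵥ b)
      linarith
    have h5 : R ≤ η * (μ / 2 * ε) := by
      rw [← div_le_iff₀ (by positivity)]
      linarith
    rw [div_le_iff₀ hηpos]
    nlinarith
end
end

section
/- Equivalence of the parabolic relaxation constraint with convex quadratic inequalities: for every x ∈ ℝⁿ and every n×n real symmetric matrix X, the matrix X − xxᵀ belongs to C₃ if and only if for all i, j ∈ {1,…,n}: Xᵢᵢ + Xⱼⱼ − 2Xᵢⱼ ≥ (xᵢ − xⱼ)² and Xᵢᵢ + Xⱼⱼ + 2Xᵢⱼ ≥ (xᵢ + xⱼ)². -/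
open Matrix

noncomputable section

theorem bmi_parabolic_characterization {n : ℕ}
    (x : Fin n → ℝ) (X : Matrix (Fin n) (Fin n) ℝ) (hX : X.IsSymm) :
    X - vecMulVec x x ∈ coneC3 n ↔
      ∀ i j, (x i - x j) ^ 2 ≤ X i i + X j j - 2 * X i j ∧
             (x i + x j) ^ 2 ≤ X i i + X j j + 2 * X i j := by
  -- With `H = X - xxᵀ`, the two inequalities read `0 ≤ Hᵢᵢ + Hⱼⱼ ∓ 2Hᵢⱼ`.
  have key : ∀ i j, (X - vecMulVec x x) i j = X i j - x i * x j := fun i j => by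
    simp [vecMulVec_apply]
  constructor
  · rintro ⟨-, h⟩ i j
    have h2 := (h i j).2
    simp only [key] at h2
    have h3 := le_abs_self (X i j - x i * x j)
    have h4 := neg_abs_le (X i j - x i * x j)
    constructor <;> nlinarith
  · intro h
    refine ⟨?_, fun i j => ?_⟩
    · refine Matrix.IsSymm.ext fun i j => ?_
      rw [key, key, hX.apply i j, mul_comm]
    · simp only [key]
      obtain ⟨h1, h2⟩ := h i j
      -- The diagonal case `j = i` of the second inequality gives `Hᵢᵢ ≥ 0`.
      have h3 := (h i i).2
      refine ⟨by nlinarith, ?_⟩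
      rcases abs_cases (X i j - x i * x j) with ⟨e, -⟩ | ⟨e, -⟩ <;> rw [e] <;> nlinarith
end
end

section
/- Quantitative distance bound for optimal solutions of the penalized problem: suppose the BMI feasible set F is nonempty and η > 0. Then every optimal solution x* of the penalized problem (P_η) satisfies d_F(x̌) ≤ ‖x* − x̌‖₂ ≤ d_F(x̌) + ‖c‖₂/η. -/
/-!
Put `r = ‖xs - xc‖` and `s = ‖a - xc‖` for a feasible point `a`. Optimality of `xs` compared with `a`
gives `η (r² - s²) ≤ c ⬝ (a - xc) - c ⬝ (xs - xc)`, which Cauchy–Schwarz bounds by `‖c‖ (r + s)`.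
Dividing by `η (r + s)` yields `r ≤ s + ‖c‖ / η`; the infimum over `a` gives the upper bound. The
lower bound holds because `xs` is itself feasible.
-/

open Matrix

noncomputable section

lemma vecNorm_nonneg {k : ℕ} (u : Fin k → ℝ) : 0 ≤ vecNorm u := Real.sqrt_nonneg _

lemma vecNorm_sub_comm {k : ℕ} (u v : Fin k → ℝ) : vecNorm (u - v) = vecNorm (v - u) := by
  unfold vecNorm
  congr 1
  refine Finset.sum_congr rfl fun i _ => ?_
  simp only [Pi.sub_apply]
  ring

lemma dotProduct_le_vecNorm {k : ℕ} (u v : Fin k → ℝ) : u ⬝ᵥ v ≤ vecNorm u * vecNorm v :=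
  Real.sum_mul_le_sqrt_mul_sqrt Finset.univ u v

lemma vecNorm_le_of_penObj_le {n : ℕ} (c xc : Fin n → ℝ) {η : ℝ} (hη : 0 < η) (x a : Fin n → ℝ)
    (h : penObj c xc η x ≤ penObj c xc η a) :
    vecNorm (x - xc) ≤ vecNorm (a - xc) + vecNorm c / η := by
  unfold penObj at h
  have h1 := dotProduct_le_vecNorm c (a - xc)
  have h2 := dotProduct_le_vecNorm c (xc - x)
  rw [vecNorm_sub_comm xc x] at h2
  rw [dotProduct_sub] at h1 h2
  have hr := vecNorm_nonneg (x - xc)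
  have hs := vecNorm_nonneg (a - xc)
  have hc := vecNorm_nonneg c
  set r := vecNorm (x - xc)
  set s := vecNorm (a - xc)
  rw [← sub_le_iff_le_add', le_div_iff₀ hη]
  by_contra! hlt
  have hrs : 0 < r - s := pos_of_mul_pos_left (hc.trans_lt hlt) hη.le
  have := mul_lt_mul_of_pos_right hlt (show 0 < r + s by linarith)
  nlinarith

theorem bmi_distance_bound {n m : ℕ} (hn : 0 < n) (hm : 0 < m)
    (F0 : Matrix (Fin m) (Fin m) ℝ)
    (K : Fin n → Matrix (Fin m) (Fin m) ℝ)
    (L : Fin n → Fin n → Matrix (Fin m) (Fin m) ℝ)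
    (hF0 : F0.IsSymm) (hK : ∀ k, (K k).IsSymm)
    (hL : ∀ i j, (L i j).IsSymm) (hLsy : ∀ i j, L i j = L j i)
    (c xc : Fin n → ℝ)
    (hne : (feasSet F0 K L).Nonempty)
    (η : ℝ) (hη : 0 < η) :
    ∀ xs : Fin n → ℝ, IsOptPen F0 K L c xc η xs →
      distF F0 K L xc ≤ vecNorm (xs - xc) ∧
      vecNorm (xs - xc) ≤ distF F0 K L xc + vecNorm c / η := by
  intro xs hxs
  refine ⟨?_, ?_⟩
  · refine csInf_le ⟨0, ?_⟩ ⟨xs, hxs.1, vecNorm_sub_comm _ _⟩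
    rintro _ ⟨a, -, rfl⟩
    exact vecNorm_nonneg _
  · rw [← sub_le_iff_le_add]
    obtain ⟨a₀, ha₀⟩ := hne
    refine le_csInf ⟨_, a₀, ha₀, rfl⟩ ?_
    rintro _ ⟨a, ha, rfl⟩
    rw [sub_le_iff_le_add, vecNorm_sub_comm xc a]
    exact vecNorm_le_of_penObj_le c xc hη xs a (hxs.2 a ha)
end
end
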